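/- arXiv:2311.06387 — 3 statements merged into one kernel-verified Lean document; each statement's English description precedes it below -/
import Mathlib

section
/- Let P ⊆ Φ_{B_n} be a signed poset and let f ∈ ℤ^n be a P-partition. Then there exist k ≥ 0 and ideals J_1 ⊇ J_2 ⊇ ⋯ ⊇ J_k of P (as subsets of ±[n]) such that f = χ_{J_1} + χ_{J_2} + ⋯ + χ_{J_k}. -/
open scoped Classical

noncomputable section

/-- Signed index set `±[n]`: `(true, i)` represents `+i`, `(false, i)` represents `-i`. -/
abbrev SIdx (n : ℕ) := Bool × Fin n

/-- Negation `a ↦ -a` on `±[n]`. -/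
def negS {n : ℕ} (a : SIdx n) : SIdx n := (!a.1, a.2)

/-- Standard basis vector `e_i` of `ℝ^n`. -/
def stdB (n : ℕ) (i : Fin n) : Fin n → ℝ := Pi.single i 1

/-- `rsgn true = 1`, `rsgn false = -1`. -/
def rsgn (s : Bool) : ℝ := if s then 1 else -1

/-- `v(a)` for `a ∈ ±[n]`: `v(+i) = e_i`, `v(-i) = -e_i`. -/
def vS {n : ℕ} (a : SIdx n) : Fin n → ℝ := rsgn a.1 • stdB n a.2

/-- `v` on `±[n] ∪ {0}` (with `none` playing the role of `0`). -/
def vO {n : ℕ} : Option (SIdx n) → (Fin n → ℝ)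
  | none => 0
  | some a => vS a

/-- Negation on `±[n] ∪ {0}`, fixing `0`. -/
def negO {n : ℕ} : Option (SIdx n) → Option (SIdx n)
  | none => none
  | some a => some (negS a)

/-- Standard inner product on `ℝ^n`. -/
def dotR {n : ℕ} (x y : Fin n → ℝ) : ℝ := ∑ i, x i * y i

/-- The type `B_n` root system `Φ_{B_n}`. -/
def BnRoots (n : ℕ) : Set (Fin n → ℝ) :=
  {α | (∃ i j : Fin n, i < j ∧ ∃ s t : Bool, α = rsgn s • stdB n i + rsgn t • stdB n j) ∨
    ∃ i : Fin n, ∃ s : Bool, α = rsgn s • stdB n i}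

/-- The positive roots `Φ⁺_{B_n}`. -/
def BnPos (n : ℕ) : Set (Fin n → ℝ) :=
  {α | (∃ i j : Fin n, i < j ∧ ∃ t : Bool, α = stdB n i + rsgn t • stdB n j) ∨
    ∃ i : Fin n, α = stdB n i}

/-- The type `C_n` root system `Φ_{C_n}`. -/
def CnRoots (n : ℕ) : Set (Fin n → ℝ) :=
  {α | (∃ i j : Fin n, i < j ∧ ∃ s t : Bool, α = rsgn s • stdB n i + rsgn t • stdB n j) ∨
    ∃ i : Fin n, ∃ s : Bool, α = (2 * rsgn s) • stdB n i}

/-- Nonnegative real linear combinations of elements of `S`. -/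
def nnSpan {n : ℕ} (S : Set (Fin n → ℝ)) : Set (Fin n → ℝ) :=
  {x | ∃ (r : ℕ) (c : Fin r → ℝ) (β : Fin r → (Fin n → ℝ)),
    (∀ m, 0 ≤ c m) ∧ (∀ m, β m ∈ S) ∧ x = ∑ m, c m • β m}

/-- A signed poset: a subset of `Φ_{B_n}`, antisymmetric and closed under positive
linear combinations remaining in `Φ_{B_n}`. -/
def IsSignedPoset (n : ℕ) (P : Set (Fin n → ℝ)) : Prop :=
  P ⊆ BnRoots n ∧ (∀ α ∈ P, -α ∉ P) ∧ ∀ α ∈ BnRoots n, α ∈ nnSpan P → α ∈ P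

/-- A `C_n`-signed poset. -/
def IsCnSignedPoset (n : ℕ) (Q : Set (Fin n → ℝ)) : Prop :=
  Q ⊆ CnRoots n ∧ (∀ α ∈ Q, -α ∉ Q) ∧ ∀ α ∈ CnRoots n, α ∈ nnSpan Q → α ∈ Q

/-- The root cone `K^rt_P`. -/
def rootCone {n : ℕ} (P : Set (Fin n → ℝ)) : Set (Fin n → ℝ) := nnSpan P

/-- The weight cone `K^wt_P`. -/
def weightCone {n : ℕ} (P : Set (Fin n → ℝ)) : Set (Fin n → ℝ) :=
  {f | ∀ α ∈ P, 0 ≤ dotR f α}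

/-- The Fischer (strict) order on `±[n] ∪ {0}`:
`a < b` iff `v(a) - v(b) ∈ P`, or (`b = -a ≠ 0` and `v(a) ∈ P`). -/
def fLT {n : ℕ} (P : Set (Fin n → ℝ)) (a b : Option (SIdx n)) : Prop :=
  vO a - vO b ∈ P ∨ (a ≠ none ∧ b = negO a ∧ vO a ∈ P)

/-- A subset of `±[n]` is isotropic if it contains no pair `{i, -i}`. -/
def Isotropic {n : ℕ} (J : Finset (SIdx n)) : Prop :=
  ∀ i : Fin n, ¬((true, i) ∈ J ∧ (false, i) ∈ J)

/-- Signed characteristic vector of a subset of `±[n]`. -/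
def chiF {n : ℕ} (J : Finset (SIdx n)) : Fin n → ℝ := fun i =>
  if (true, i) ∈ J then 1 else if (false, i) ∈ J then -1 else 0

/-- `J` is an ideal of the signed poset `P`. -/
def IsIdeal {n : ℕ} (P : Set (Fin n → ℝ)) (J : Finset (SIdx n)) : Prop :=
  Isotropic J ∧ ∀ α ∈ P, 0 ≤ dotR (chiF J) α

/-- Comparability in the Fischer order of `P`. -/
def fComp {n : ℕ} (P : Set (Fin n → ℝ)) (a b : SIdx n) : Prop :=
  fLT P (some a) (some b) ∨ fLT P (some b) (some a)

/-- One step in the comparability graph on a subset `J` of `±[n]`. -/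
def connStep {n : ℕ} (P : Set (Fin n → ℝ)) (J : Finset (SIdx n)) (a b : SIdx n) : Prop :=
  a ∈ J ∧ b ∈ J ∧ fComp P a b

/-- `J` is connected: nonempty, and any two of its elements are joined by a path inside `J`
in the comparability graph of the Fischer order of `P`. -/
def IsConnectedIdl {n : ℕ} (P : Set (Fin n → ℝ)) (J : Finset (SIdx n)) : Prop :=
  J.Nonempty ∧ ∀ a ∈ J, ∀ b ∈ J, Relation.ReflTransGen (connStep P J) a b

/-- A connected ideal of `P`. -/
def IsConnIdeal {n : ℕ} (P : Set (Fin n → ℝ)) (J : Finset (SIdx n)) : Prop :=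
  IsIdeal P J ∧ IsConnectedIdl P J

/-- Support `supp J = {|a| : a ∈ J}`. -/
def suppF {n : ℕ} (J : Finset (SIdx n)) : Finset (Fin n) := J.image Prod.snd

/-- `J` and `K` intersect nontrivially. -/
def NontrivInter {n : ℕ} (J K : Finset (SIdx n)) : Prop :=
  (suppF J ∩ suppF K).Nonempty ∧ ¬J ⊆ K ∧ ¬K ⊆ J

/-- `J` and `K` intersect trivially. -/
def TrivInter {n : ℕ} (J K : Finset (SIdx n)) : Prop := ¬NontrivInter J K

/-- A signed permutation, as an anti-symmetric bijection of `±[n]`. -/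
def IsSPerm {n : ℕ} (w : SIdx n ≃ SIdx n) : Prop := ∀ a, w (negS a) = negS (w a)

/-- Linear action of a signed permutation on `ℝ^n`, determined by `w(e_i) = v(w(+i))`. -/
def spAct {n : ℕ} (w : SIdx n ≃ SIdx n) (x : Fin n → ℝ) : Fin n → ℝ :=
  ∑ i, x i • vS (w (true, i))

/-- `w` is a linear extension of `P`: a signed permutation with `P ⊆ w(Φ⁺_{B_n})`. -/
def IsLinExt {n : ℕ} (P : Set (Fin n → ℝ)) (w : SIdx n ≃ SIdx n) : Prop :=
  IsSPerm w ∧ ∀ α ∈ P, ∃ β ∈ BnPos n, α = spAct w β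

/-- The (finite) set `𝓛(P)` of linear extensions of `P`. -/
def linExts (n : ℕ) (P : Set (Fin n → ℝ)) : Finset (SIdx n ≃ SIdx n) :=
  Finset.univ.filter (IsLinExt P)

/-- Simple roots of `Φ_{B_n}`: `α_i = e_i - e_{i+1}` for `i < n - 1`, `α_{n-1} = e_{n-1}`
(0-indexed). -/
def simpleRoot (n : ℕ) (i : Fin n) : Fin n → ℝ := fun j =>
  (if j = i then (1 : ℝ) else 0) - if (j : ℕ) = (i : ℕ) + 1 then 1 else 0

/-- `J^w_m = {w(1), …, w(m)}` (0-indexed: the images under `w` of `+1, …, +(m+1)`). -/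
def JwSet {n : ℕ} (w : SIdx n ≃ SIdx n) (m : Fin n) : Finset (SIdx n) :=
  (Finset.univ.filter (fun j : Fin n => j ≤ m)).image (fun j => w (true, j))

/-- An extensible ideal of `P`. -/
def Extensible (n : ℕ) (P : Set (Fin n → ℝ)) (J : Finset (SIdx n)) : Prop :=
  ∃ I : Finset (SIdx n), I.Nonempty ∧ Disjoint I J ∧
    IsIdeal P (J ∪ I) ∧ IsIdeal P (J ∪ I.image negS)

/-- The finite set `J_conn(P)` of connected ideals of `P`. -/
def JconnF (n : ℕ) (P : Set (Fin n → ℝ)) : Finset (Finset (SIdx n)) :=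
  Finset.univ.filter (IsConnIdeal P)

/-- Membership in `Π(P)`: an unordered pair of nontrivially intersecting connected ideals. -/
def inPiP {n : ℕ} (P : Set (Fin n → ℝ)) (p : Sym2 (Finset (SIdx n))) : Prop :=
  ∃ J K : Finset (SIdx n),
    p = s(J, K) ∧ IsConnIdeal P J ∧ IsConnIdeal P K ∧ NontrivInter J K

/-- The finite set `Π(P)` of unordered pairs of nontrivially intersecting connected ideals. -/
def PiP (n : ℕ) (P : Set (Fin n → ℝ)) : Finset (Sym2 (Finset (SIdx n))) :=
  Finset.univ.filter (inPiP P)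

/-- No connected ideal of `P` intersects two or more other connected ideals nontrivially. -/
def NoDoubleNontriv (n : ℕ) (P : Set (Fin n → ℝ)) : Prop :=
  ∀ J K K' : Finset (SIdx n), IsConnIdeal P J → IsConnIdeal P K → IsConnIdeal P K' →
    NontrivInter J K → NontrivInter J K' → K = K'

/-- The connected component of `a` inside `J` (w.r.t. the Fischer comparability graph). -/
def componentIn {n : ℕ} (P : Set (Fin n → ℝ)) (J : Finset (SIdx n)) (a : SIdx n) :
    Finset (SIdx n) :=
  J.filter (fun b => Relation.ReflTransGen (connStep P J) a b)

/-- The set of connected components of `J`. -/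
def componentsOf {n : ℕ} (P : Set (Fin n → ℝ)) (J : Finset (SIdx n)) :
    Finset (Finset (SIdx n)) :=
  J.image (componentIn P J)

/-- The signed support `supp±(f) = {sgn(f_i)·i : f_i ≠ 0}` of a vector `f ∈ ℝ^n`. -/
def suppPM {n : ℕ} (f : Fin n → ℝ) : Finset (SIdx n) :=
  Finset.univ.filter (fun a : SIdx n => if a.1 then 0 < f a.2 else f a.2 < 0)

/-- Index type for the variables `U_J`, `J` a connected ideal of `P`. -/
abbrev ConnIdx (n : ℕ) (P : Set (Fin n → ℝ)) := {J : Finset (SIdx n) // IsConnIdeal P J}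

/-- Integer signed characteristic vector, as an exponent vector for Laurent monomials. -/
def chiZ {n : ℕ} (J : Finset (SIdx n)) : Fin n →₀ ℤ :=
  Finsupp.equivFunOnFinite.symm (fun i =>
    if (true, i) ∈ J then 1 else if (false, i) ∈ J then -1 else 0)

/-- The map `φ : k[U_J : J ∈ J_conn(P)] → k[x_1^{±1}, …, x_n^{±1}]`, `U_J ↦ x^{χ_J}`. -/
def phiWt (n : ℕ) (P : Set (Fin n → ℝ)) (k : Type) [Field k] :
    MvPolynomial (ConnIdx n P) k →ₐ[k] AddMonoidAlgebra k (Fin n →₀ ℤ) :=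
  MvPolynomial.aeval (fun J => AddMonoidAlgebra.single (chiZ J.val) 1)

/-- The binomial `syz(U_J, U_K) = U_J U_K - (∏_A U_A) (∏_B U_B)`, where `A` runs over the
connected components of `J ∩ K` and `B` over the connected components of `supp±(χ_J + χ_K)`. -/
def syzPoly (n : ℕ) (P : Set (Fin n → ℝ)) (k : Type) [Field k] (J K : ConnIdx n P) :
    MvPolynomial (ConnIdx n P) k :=
  MvPolynomial.X J * MvPolynomial.X K -
    (∏ A ∈ Finset.univ.filter
        (fun A : ConnIdx n P => (A : Finset (SIdx n)) ∈ componentsOf P (J.val ∩ K.val)),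
        MvPolynomial.X A) *
      ∏ B ∈ Finset.univ.filter
        (fun B : ConnIdx n P =>
          (B : Finset (SIdx n)) ∈ componentsOf P (suppPM (chiF J.val + chiF K.val))),
        MvPolynomial.X B

/-- `θ_1, …, θ_r` is a regular sequence: the ideal it generates is proper, and each `θ_{m+1}`
is a non-zero-divisor modulo the ideal generated by `θ_1, …, θ_m`. -/
def IsRegSeq {R : Type} [CommRing R] {r : ℕ} (θ : Fin r → R) : Prop :=
  Ideal.span (Set.range θ) ≠ ⊤ ∧
    ∀ (m : ℕ) (hm : m < r) (x : R),
      θ ⟨m, hm⟩ * x ∈ Ideal.span (θ '' {j : Fin r | (j : ℕ) < m}) →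
        x ∈ Ideal.span (θ '' {j : Fin r | (j : ℕ) < m})

/-- The induced signed poset `P_A = P ∩ span_ℝ{e_i : i ∈ A}`. -/
def inducedPoset (n : ℕ) (P : Set (Fin n → ℝ)) (A : Finset (Fin n)) : Set (Fin n → ℝ) :=
  {α | α ∈ P ∧ α ∈ Submodule.span ℝ (stdB n '' (A : Set (Fin n)))}

/-- The major index of a signed permutation. -/
def majB {n : ℕ} (w : SIdx n ≃ SIdx n) : ℕ :=
  ∑ i ∈ Finset.univ.filter
      (fun i : Fin n => spAct w (simpleRoot n i) ∉ BnPos n), ((i : ℕ) + 1)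

/-- `[m]_q = 1 + q + ⋯ + q^{m-1}` in `ℤ[q]`. -/
def qInt (m : ℕ) : Polynomial ℤ := ∑ t ∈ Finset.range m, Polynomial.X ^ t

/-- The symmetric function `{J, K} ↦ ⟨x, χ_J + χ_K⟩` on unordered pairs. -/
def pairDot {n : ℕ} (x : Fin n → ℝ) : Sym2 (Finset (SIdx n)) → ℝ :=
  Sym2.lift ⟨fun J K => dotR x (chiF J + chiF K),
    fun J K => congrArg (dotR x) (add_comm (chiF J) (chiF K))⟩

/-- The symmetric function `{J, K} ↦ [|J| + |K|]_q` on unordered pairs. -/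
def pairQ {n : ℕ} : Sym2 (Finset (SIdx n)) → Polynomial ℤ :=
  Sym2.lift ⟨fun J K => qInt (J.card + K.card),
    fun J K => congrArg qInt (Nat.add_comm J.card K.card)⟩

/-- The principal order ideal `I_≤(a)` in the Fischer order restricted to `±[n]`. -/
def Ile {n : ℕ} (P : Set (Fin n → ℝ)) (a : SIdx n) : Set (SIdx n) :=
  {b | b = a ∨ fLT P (some b) (some a)}

/-- A set of signed indices is isotropic if it contains no pair `{i, -i}`. -/
def IsoSet {n : ℕ} (S : Set (SIdx n)) : Prop :=
  ∀ i : Fin n, ¬((true, i) ∈ S ∧ (false, i) ∈ S)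

/-- A covering pair of the Fischer order of `P`. -/
def CovPair {n : ℕ} (P : Set (Fin n → ℝ)) (a b : Option (SIdx n)) : Prop :=
  fLT P a b ∧ ¬∃ c : Option (SIdx n), fLT P a c ∧ fLT P c b

/-- The set of covering roots of `P`. -/
def covRoots {n : ℕ} (P : Set (Fin n → ℝ)) : Set (Fin n → ℝ) :=
  {x | ∃ a b : Option (SIdx n), CovPair P a b ∧ x = vO a - vO b}

/-- The set `J_ε = {i : ε_i = 1} ∪ {-i : ε_i = -1}` attached to a `{-1,0,1}`-vector. -/
def Jeps {n : ℕ} (ε : Fin n → ℝ) : Set (SIdx n) :=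
  {a | (a.1 = true ∧ ε a.2 = 1) ∨ (a.1 = false ∧ ε a.2 = -1)}

/-!
Slice `f` by the thresholds `0, 1, 2, …`: the level `J_t` consists of the signed indices `±i` with
`t < ±f i`. For `t ≥ 0` its characteristic vector arises from `f` by applying to each coordinate
the step function with values `-1, 0, 1` and jumps at `±t`, which is odd and monotone. Pairing with
a root of `B_n` gives `±f i` or `±f i ± f j`, and an odd monotone function preserves the
inequalities `0 ≤ ±f i` and `0 ≤ ±f i ± f j`, the latter read as `∓f i ≤ ±f j`; so every level is
an ideal. An integer `x` with `|x| ≤ r` is the sum of its steps at the thresholds `0, …, r - 1`.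
-/

section WeightCone

variable {n : ℕ}

lemma dotR_add_right (x y z : Fin n → ℝ) : dotR x (y + z) = dotR x y + dotR x z :=
  dotProduct_add x y z

lemma dotR_rsgn_smul_stdB (x : Fin n → ℝ) (s : Bool) (i : Fin n) :
    dotR x (rsgn s • stdB n i) = rsgn s * x i := by
  change x ⬝ᵥ (rsgn s • Pi.single i 1) = rsgn s * x i
  rw [dotProduct_smul, dotProduct_single_one, smul_eq_mul]

lemma map_rsgn_mul_of_odd {g : ℝ → ℝ} (hodd : g.Odd) (s : Bool) (x : ℝ) :
    g (rsgn s * x) = rsgn s * g x := by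
  cases s <;> simp [rsgn, hodd x]

lemma map_add_map_nonneg_of_odd_of_monotone {g : ℝ → ℝ} (hodd : g.Odd) (hmono : Monotone g)
    {x y : ℝ} (hxy : 0 ≤ x + y) : 0 ≤ g x + g y := by
  have hle : g (-x) ≤ g y := hmono (neg_le_iff_add_nonneg'.mpr hxy)
  rwa [hodd x, neg_le_iff_add_nonneg'] at hle

theorem comp_mem_weightCone_of_odd_of_monotone {P : Set (Fin n → ℝ)} (hP : P ⊆ BnRoots n)
    {g : ℝ → ℝ} (hodd : g.Odd) (hmono : Monotone g) {f : Fin n → ℝ} (hf : f ∈ weightCone P) :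
    g ∘ f ∈ weightCone P := by
  intro α hα
  have hfα : 0 ≤ dotR f α := hf α hα
  rcases hP hα with ⟨i, j, -, s, t, rfl⟩ | ⟨i, s, rfl⟩
  · simp only [dotR_add_right, dotR_rsgn_smul_stdB, Function.comp_apply,
      ← map_rsgn_mul_of_odd hodd] at hfα ⊢
    exact map_add_map_nonneg_of_odd_of_monotone hodd hmono hfα
  · rw [dotR_rsgn_smul_stdB] at hfα ⊢
    rw [Function.comp_apply, ← map_rsgn_mul_of_odd hodd, ← hodd.map_zero]
    exact hmono hfα

end WeightCone

section SignStep

/-- The step function with values `-1, 0, 1` and jumps at `±t`. Written as a difference of two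
indicators, it is odd and monotone for every `t`, including `t < 0`. -/
def signStep (t x : ℝ) : ℝ := (if t < x then 1 else 0) - if t < -x then 1 else 0

lemma signStep_odd (t : ℝ) : (signStep t).Odd := by
  intro x
  simp only [signStep, neg_neg, neg_sub]

lemma signStep_monotone (t : ℝ) : Monotone (signStep t) := by
  have hind : Monotone fun x : ℝ => if t < x then (1 : ℝ) else 0 := by
    intro x y hxy
    dsimp only
    split_ifs <;> linarith
  exact fun x y hxy => sub_le_sub (hind hxy) (hind (neg_le_neg hxy))

lemma sum_range_ite_lt_intCast {r : ℕ} {x : ℤ} (hx : x ≤ r) :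
    ∑ m ∈ Finset.range r, (if (m : ℝ) < x then (1 : ℝ) else 0) = x.toNat := by
  have hfilter : (Finset.range r).filter (fun m : ℕ => (m : ℝ) < x) = Finset.range x.toNat := by
    ext m
    have hcast : (m : ℝ) < x ↔ (m : ℤ) < x := by exact_mod_cast Iff.rfl
    simp only [Finset.mem_filter, Finset.mem_range, hcast]
    omega
  rw [Finset.sum_boole, hfilter, Finset.card_range]

lemma sum_range_signStep {r : ℕ} {x : ℤ} (hx : x.natAbs ≤ r) :
    ∑ m ∈ Finset.range r, signStep m x = x := by
  simp only [signStep, Finset.sum_sub_distrib, ← Int.cast_neg]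
  rw [sum_range_ite_lt_intCast (by omega), sum_range_ite_lt_intCast (by omega)]
  exact_mod_cast x.toNat_sub_toNat_neg

end SignStep

section SignedSuperlevel

variable {n : ℕ}

/-- The set of signed indices `a ∈ ±[n]` at which `⟨f, v(a)⟩`, that is `±f i` for `a = ±i`,
exceeds the threshold `t`. -/
def signedSuperlevel (f : Fin n → ℝ) (t : ℝ) : Finset (SIdx n) :=
  Finset.univ.filter fun a => t < rsgn a.1 * f a.2

lemma true_mem_signedSuperlevel {f : Fin n → ℝ} {t : ℝ} {i : Fin n} :
    (true, i) ∈ signedSuperlevel f t ↔ t < f i := by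
  simp [signedSuperlevel, rsgn]

lemma false_mem_signedSuperlevel {f : Fin n → ℝ} {t : ℝ} {i : Fin n} :
    (false, i) ∈ signedSuperlevel f t ↔ t < -f i := by
  simp [signedSuperlevel, rsgn]

lemma signedSuperlevel_antitone (f : Fin n → ℝ) : Antitone (signedSuperlevel f) :=
  fun _ _ hst => Finset.monotone_filter_right _ fun _ _ ht => hst.trans_lt ht

lemma isotropic_signedSuperlevel (f : Fin n → ℝ) {t : ℝ} (ht : 0 ≤ t) :
    Isotropic (signedSuperlevel f t) := by
  rintro i ⟨hpos, hneg⟩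
  rw [true_mem_signedSuperlevel] at hpos
  rw [false_mem_signedSuperlevel] at hneg
  linarith

lemma chiF_signedSuperlevel (f : Fin n → ℝ) {t : ℝ} (ht : 0 ≤ t) :
    chiF (signedSuperlevel f t) = signStep t ∘ f := by
  funext i
  simp only [chiF, true_mem_signedSuperlevel, false_mem_signedSuperlevel, Function.comp_apply,
    signStep]
  split_ifs <;> linarith

theorem isIdeal_signedSuperlevel {P : Set (Fin n → ℝ)} (hP : P ⊆ BnRoots n) {f : Fin n → ℝ}
    (hf : f ∈ weightCone P) {t : ℝ} (ht : 0 ≤ t) : IsIdeal P (signedSuperlevel f t) := by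
  refine ⟨isotropic_signedSuperlevel f ht, ?_⟩
  rw [chiF_signedSuperlevel f ht]
  exact comp_mem_weightCone_of_odd_of_monotone hP (signStep_odd t) (signStep_monotone t) hf

theorem sum_chiF_signedSuperlevel_intCast {f : Fin n → ℤ} {r : ℕ} (hr : ∀ i, (f i).natAbs ≤ r) :
    ∑ m : Fin r, chiF (signedSuperlevel (fun i => (f i : ℝ)) m) = fun i => (f i : ℝ) := by
  funext i
  simp only [Finset.sum_apply, chiF_signedSuperlevel _ (Nat.cast_nonneg _), Function.comp_apply]
  rw [Fin.sum_univ_eq_sum_range fun m => signStep m (f i), sum_range_signStep (hr i)]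

end SignedSuperlevel

theorem statement_14_general {n : ℕ} {P : Set (Fin n → ℝ)} (hP : P ⊆ BnRoots n)
    {f : Fin n → ℤ} (hf : (fun i => (f i : ℝ)) ∈ weightCone P) :
    ∃ (r : ℕ) (J : Fin r → Finset (SIdx n)),
      (∀ m, IsIdeal P (J m)) ∧
      (∀ m m' : Fin r, m ≤ m' → J m' ⊆ J m) ∧
      (fun i => (f i : ℝ)) = ∑ m, chiF (J m) := by
  refine ⟨Finset.univ.sup fun i => (f i).natAbs, fun m => signedSuperlevel (fun i => f i) m,
    fun m => isIdeal_signedSuperlevel hP hf m.val.cast_nonneg,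
    fun m m' hm => signedSuperlevel_antitone _ (Nat.cast_le.mpr hm), ?_⟩
  have hbound : ∀ i, (f i).natAbs ≤ Finset.univ.sup fun i => (f i).natAbs :=
    fun i => Finset.le_sup (f := fun i => (f i).natAbs) (Finset.mem_univ i)
  exact (sum_chiF_signedSuperlevel_intCast hbound).symm

theorem statement_14 (n : ℕ) (hn : 1 ≤ n) (P : Set (Fin n → ℝ)) (hP : IsSignedPoset n P)
    (f : Fin n → ℤ) (hf : ∀ α ∈ P, 0 ≤ dotR (fun i => (f i : ℝ)) α) :
    ∃ (r : ℕ) (J : Fin r → Finset (SIdx n)),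
      (∀ m, IsIdeal P (J m)) ∧
      (∀ m m' : Fin r, m ≤ m' → J m' ⊆ J m) ∧
      (fun i => (f i : ℝ)) = ∑ m, chiF (J m) := by
  exact statement_14_general hP.1 hf
end
end

section
/- Let P ⊆ Φ_{B_n} be a signed poset and let f ∈ ℤ^n be a P-partition. Then there is exactly one finite multiset {J_1, …, J_r} of connected ideals of P (repetitions allowed, r ≥ 0) whose members pairwise intersect trivially and which satisfies f = χ_{J_1} + ⋯ + χ_{J_r}. -/
open scoped Classical

noncomputable section

/-!
Write `f(a) = ⟨f, v(a)⟩` for `a ∈ ±[n]`. Let `S` be the signed support of a `P`-partition `f ∈ ℤ^n`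
and let `J` be a connected component of `S`. Then `0 ≤ ⟨χ_J, α⟩ ≤ ⟨f, α⟩` for every `α ∈ P`: if
`α = v(b) - v(c)` with `f(b)` and `f(c)` of the same strict sign, then `χ_J(b) = χ_J(c)` because
comparable elements of `S` lie in the same component, and otherwise `f(b) ≥ 0 ≥ f(c)`, where
integrality places `χ_J` coordinatewise between `0` and `f`. Hence `J` is a connected ideal and
`f - χ_J` is again a `P`-partition, which gives existence by induction on `∑ |f i|`.

Conversely, the members of a decomposition of `f` cover exactly `S`, and a maximal member is closed
under comparability in `S`, so it is a component of `S`. All decompositions of `f` therefore share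
every component of `S`, and removing one of them gives uniqueness by induction.
-/

section SignedCoordinates

variable {n : ℕ} {f : Fin n → ℝ} {J S : Finset (SIdx n)} {a b : SIdx n}

theorem dotR_vS (f : Fin n → ℝ) (a : SIdx n) : dotR f (vS a) = rsgn a.1 * f a.2 := by
  simp [dotR, vS, stdB, Pi.single_apply, mul_comm]

theorem dotR_add_left (f g x : Fin n → ℝ) : dotR (f + g) x = dotR f x + dotR g x :=
  add_dotProduct f g x

theorem dotR_sub_left (f g x : Fin n → ℝ) : dotR (f - g) x = dotR f x - dotR g x :=
  sub_dotProduct f g x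

theorem dotR_sub_right (f x y : Fin n → ℝ) : dotR f (x - y) = dotR f x - dotR f y :=
  dotProduct_sub f x y

theorem vS_negS (a : SIdx n) : vS (negS a) = -vS a := by
  rcases a with ⟨_ | _, i⟩ <;> simp [vS, negS, rsgn]

theorem dotR_vS_negS (f : Fin n → ℝ) (a : SIdx n) : dotR f (vS (negS a)) = -dotR f (vS a) := by
  rw [vS_negS]
  exact dotProduct_neg f (vS a)

theorem mem_suppPM : a ∈ suppPM f ↔ 0 < dotR f (vS a) := by
  rcases a with ⟨_ | _, i⟩ <;> simp [suppPM, dotR_vS, rsgn]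

theorem negS_mem_suppPM : negS a ∈ suppPM f ↔ dotR f (vS a) < 0 := by
  rw [mem_suppPM, dotR_vS_negS, neg_pos]

theorem suppPM_nonempty (hf : f ≠ 0) : (suppPM f).Nonempty := by
  obtain ⟨i, hi⟩ := Function.ne_iff.1 hf
  rcases lt_or_gt_of_ne hi with hneg | hpos
  · exact ⟨(false, i), by simpa [suppPM] using hneg⟩
  · exact ⟨(true, i), by simpa [suppPM] using hpos⟩

theorem eq_or_eq_negS_of_snd_eq (h : a.2 = b.2) : b = a ∨ b = negS a := by
  rcases a with ⟨_ | _, i⟩ <;> rcases b with ⟨_ | _, j⟩ <;> simp_all [negS]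

theorem Isotropic.mono (hS : Isotropic S) (hJS : J ⊆ S) : Isotropic J :=
  fun i h => hS i ⟨hJS h.1, hJS h.2⟩

theorem Isotropic.negS_notMem (hJ : Isotropic J) (ha : a ∈ J) : negS a ∉ J := by
  rcases a with ⟨_ | _, i⟩
  · exact fun h => hJ i ⟨h, ha⟩
  · exact fun h => hJ i ⟨ha, h⟩

theorem Isotropic.eq_of_snd_eq (hJ : Isotropic J) (ha : a ∈ J) (hb : b ∈ J) (h : a.2 = b.2) :
    a = b :=
  (eq_or_eq_negS_of_snd_eq h).elim Eq.symm fun hba => absurd (hba ▸ hb) (hJ.negS_notMem ha)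

theorem isotropic_suppPM (f : Fin n → ℝ) : Isotropic (suppPM f) := by
  intro i h
  simp only [suppPM, Finset.mem_filter, Finset.mem_univ, true_and, if_true, Bool.false_eq_true,
    if_false] at h
  exact lt_asymm h.1 h.2

theorem dotR_chiF_vS (hJ : Isotropic J) (a : SIdx n) :
    dotR (chiF J) (vS a) = if a ∈ J then 1 else if negS a ∈ J then -1 else 0 := by
  rcases a with ⟨_ | _, i⟩ <;> have := hJ i <;> simp only [dotR_vS, chiF, negS, rsgn] <;>
    split_ifs <;> simp_all

theorem dotR_sum_chiF_vS {M : Multiset (Finset (SIdx n))} (hM : ∀ J ∈ M, Isotropic J)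
    (a : SIdx n) :
    dotR (M.map chiF).sum (vS a) = (M.countP (a ∈ ·) : ℝ) - M.countP (negS a ∈ ·) := by
  induction M using Multiset.induction with
  | empty => simp [dotR]
  | cons J M ih =>
    have hJ := hM J (Multiset.mem_cons_self J M)
    have hna : a ∈ J → negS a ∉ J := hJ.negS_notMem
    rw [Multiset.map_cons, Multiset.sum_cons, dotR_add_left, dotR_chiF_vS hJ,
      ih fun K hK => hM K (Multiset.mem_cons_of_mem hK), Multiset.countP_cons, Multiset.countP_cons]
    push_cast
    grind

theorem one_le_dotR_vS_of_mem_suppPM (f : Fin n → ℤ) (ha : a ∈ suppPM (fun i => (f i : ℝ))) :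
    1 ≤ dotR (fun i => (f i : ℝ)) (vS a) := by
  rw [mem_suppPM] at ha
  rcases a with ⟨_ | _, i⟩ <;> simp only [dotR_vS, rsgn] at ha ⊢ <;> exact_mod_cast ha

theorem chiF_eq_chiZ (J : Finset (SIdx n)) : chiF J = fun i => (chiZ J i : ℝ) := by
  funext i
  simp [chiF, chiZ, apply_ite (Int.cast : ℤ → ℝ)]

theorem sum_natAbs_sub_chiZ_lt (f : Fin n → ℤ) (hJ : J ⊆ suppPM (fun i => (f i : ℝ)))
    (hne : J.Nonempty) : ∑ i, ((f - chiZ J) i).natAbs < ∑ i, (f i).natAbs := by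
  have hpos (i : Fin n) (h : (true, i) ∈ J) : 0 < f i := by simpa [suppPM] using hJ h
  have hneg (i : Fin n) (h : (false, i) ∈ J) : f i < 0 := by simpa [suppPM] using hJ h
  have hchi (i : Fin n) :
      chiZ J i = if (true, i) ∈ J then 1 else if (false, i) ∈ J then -1 else 0 := rfl
  obtain ⟨⟨s, i⟩, hi⟩ := hne
  refine Finset.sum_lt_sum (fun j _ => ?_) ⟨i, Finset.mem_univ i, ?_⟩
  · grind [Pi.sub_apply]
  · cases s <;> grind [Pi.sub_apply]

end SignedCoordinates

section Roots

variable {n : ℕ} {P : Set (Fin n → ℝ)} {J : Finset (SIdx n)} {a b : SIdx n}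

theorem exists_eq_vS_or_eq_vS_sub_vS {α : Fin n → ℝ} (hα : α ∈ BnRoots n) :
    (∃ a, α = vS a) ∨ ∃ a b, α = vS a - vS b := by
  rcases hα with ⟨i, j, _, s, t, rfl⟩ | ⟨i, s, rfl⟩
  · refine Or.inr ⟨(s, i), negS (t, j), ?_⟩
    rw [vS_negS, sub_neg_eq_add, vS, vS]
  · exact Or.inl ⟨(s, i), rfl⟩

theorem IsIdeal.mem_of_vS_sub_vS_mem (hJ : IsIdeal P J) (hb : b ∈ J) (hab : vS a - vS b ∈ P) :
    a ∈ J := by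
  have hle : 0 ≤ dotR (chiF J) (vS a - vS b) := hJ.2 _ hab
  rw [dotR_sub_right, dotR_chiF_vS hJ.1, dotR_chiF_vS hJ.1, if_pos hb] at hle
  by_contra ha
  rw [if_neg ha] at hle
  split_ifs at hle <;> linarith

end Roots

section Components

variable {n : ℕ} {P : Set (Fin n → ℝ)} {J K S : Finset (SIdx n)} {a b c : SIdx n}

theorem connStep_symm (h : connStep P S a b) : connStep P S b a :=
  ⟨h.2.1, h.1, h.2.2.symm⟩

instance : Std.Symm (connStep P S) :=
  ⟨fun _ _ => connStep_symm⟩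

theorem connStep_mono (hJS : J ⊆ S) : connStep P J ≤ connStep P S :=
  fun _ _ h => ⟨hJS h.1, hJS h.2.1, h.2.2⟩

theorem connStep_of_vS_sub_vS_mem (ha : a ∈ S) (hb : b ∈ S) (hab : vS a - vS b ∈ P) :
    connStep P S a b :=
  ⟨ha, hb, Or.inl (Or.inl hab)⟩

theorem vS_sub_vS_mem_of_connStep (hS : Isotropic S) (h : connStep P S a b) :
    vS a - vS b ∈ P ∨ vS b - vS a ∈ P := by
  obtain ⟨ha, hb, (hab | ⟨-, hba, -⟩) | (hba | ⟨-, hab, -⟩)⟩ := h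
  · exact Or.inl hab
  · exact absurd (Option.some_injective _ hba ▸ hb) (hS.negS_notMem ha)
  · exact Or.inr hba
  · exact absurd (Option.some_injective _ hab ▸ ha) (hS.negS_notMem hb)

theorem mem_componentIn :
    b ∈ componentIn P S a ↔ b ∈ S ∧ Relation.ReflTransGen (connStep P S) a b := by
  simp [componentIn]

theorem componentIn_subset : componentIn P S a ⊆ S :=
  Finset.filter_subset _ _

theorem self_mem_componentIn (ha : a ∈ S) : a ∈ componentIn P S a :=
  mem_componentIn.2 ⟨ha, .refl⟩

theorem mem_componentIn_of_connStep (hb : b ∈ componentIn P S a) (hbc : connStep P S b c) :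
    c ∈ componentIn P S a :=
  mem_componentIn.2 ⟨hbc.2.1, (mem_componentIn.1 hb).2.tail hbc⟩

theorem componentIn_subset_of_closed (ha : a ∈ J)
    (hJ : ∀ b c, b ∈ J → connStep P S b c → c ∈ J) : componentIn P S a ⊆ J := by
  intro b hb
  induction (mem_componentIn.1 hb).2 with
  | refl => exact ha
  | tail hpath hstep ih => exact hJ _ _ (ih (mem_componentIn.2 ⟨hstep.1, hpath⟩)) hstep

theorem isConnectedIdl_componentIn (ha : a ∈ S) : IsConnectedIdl P (componentIn P S a) := by
  have hpath (b : SIdx n) (hb : Relation.ReflTransGen (connStep P S) a b) :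
      Relation.ReflTransGen (connStep P (componentIn P S a)) a b := by
    induction hb with
    | refl => exact .refl
    | tail hab hbc ih =>
      have hb := mem_componentIn.2 ⟨hbc.1, hab⟩
      exact ih.tail ⟨hb, mem_componentIn_of_connStep hb hbc, hbc.2.2⟩
  refine ⟨⟨a, self_mem_componentIn ha⟩, fun b hb c hc => ?_⟩
  exact (symm (hpath b (mem_componentIn.1 hb).2)).trans (hpath c (mem_componentIn.1 hc).2)

theorem IsConnectedIdl.subset_componentIn (hK : IsConnectedIdl P K) (hKS : K ⊆ S) (hbK : b ∈ K)
    (hb : b ∈ componentIn P S a) : K ⊆ componentIn P S a := fun c hc =>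
  mem_componentIn.2 ⟨hKS hc, (mem_componentIn.1 hb).2.trans
    (Relation.ReflTransGen.mono (connStep_mono hKS) _ _ (hK.2 b hbK c hc))⟩

end Components

section SupportComponents

variable {n : ℕ} {P : Set (Fin n → ℝ)} {f : Fin n → ℝ} {J : Finset (SIdx n)} {a b c : SIdx n}

theorem dotR_chiF_vS_of_mem_suppPM (hJ : J ⊆ suppPM f) (hb : b ∈ suppPM f) :
    dotR (chiF J) (vS b) = if b ∈ J then 1 else 0 := by
  have hnb : negS b ∉ J := fun h => (isotropic_suppPM f).negS_notMem hb (hJ h)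
  rw [dotR_chiF_vS ((isotropic_suppPM f).mono hJ), if_neg hnb]

theorem dotR_chiF_vS_mem_Icc (hJ : J ⊆ suppPM f) (hone : ∀ b ∈ suppPM f, 1 ≤ dotR f (vS b))
    (hb : 0 ≤ dotR f (vS b)) : dotR (chiF J) (vS b) ∈ Set.Icc 0 (dotR f (vS b)) := by
  have hnb : negS b ∉ J := fun h => (negS_mem_suppPM.1 (hJ h)).not_ge hb
  rw [dotR_chiF_vS ((isotropic_suppPM f).mono hJ), if_neg hnb]
  split_ifs with hbJ
  · exact ⟨zero_le_one, hone b (hJ hbJ)⟩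
  · exact ⟨le_rfl, hb⟩

theorem suppPM_sub_chiF_subset (hJ : J ⊆ suppPM f) (hone : ∀ b ∈ suppPM f, 1 ≤ dotR f (vS b)) :
    suppPM (f - chiF J) ⊆ suppPM f := by
  intro b hb
  rw [mem_suppPM, dotR_sub_left] at hb
  rw [mem_suppPM]
  by_contra! hle
  have hchi := dotR_chiF_vS_mem_Icc (b := negS b) hJ hone (by rwa [dotR_vS_negS, neg_nonneg])
  rw [dotR_vS_negS, dotR_vS_negS] at hchi
  linarith [hchi.2]

theorem dotR_chiF_componentIn_eq_of_connStep (h : connStep P (suppPM f) b c) :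
    dotR (chiF (componentIn P (suppPM f) a)) (vS b) =
      dotR (chiF (componentIn P (suppPM f) a)) (vS c) := by
  have hmem : b ∈ componentIn P (suppPM f) a ↔ c ∈ componentIn P (suppPM f) a :=
    ⟨fun hb => mem_componentIn_of_connStep hb h,
      fun hc => mem_componentIn_of_connStep hc (connStep_symm h)⟩
  simp only [dotR_chiF_vS_of_mem_suppPM componentIn_subset h.1,
    dotR_chiF_vS_of_mem_suppPM componentIn_subset h.2.1, hmem]

theorem dotR_chiF_componentIn_vS_sub_vS_mem_Icc (hone : ∀ b ∈ suppPM f, 1 ≤ dotR f (vS b))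
    (hbc : vS b - vS c ∈ P) (hle : dotR f (vS c) ≤ dotR f (vS b)) :
    dotR (chiF (componentIn P (suppPM f) a)) (vS b - vS c) ∈
      Set.Icc 0 (dotR f (vS b - vS c)) := by
  rw [dotR_sub_right, dotR_sub_right]
  by_cases hc : c ∈ suppPM f
  · have hb : b ∈ suppPM f := mem_suppPM.2 ((mem_suppPM.1 hc).trans_le hle)
    rw [dotR_chiF_componentIn_eq_of_connStep (connStep_of_vS_sub_vS_mem hb hc hbc), sub_self]
    exact ⟨le_rfl, sub_nonneg.2 hle⟩
  by_cases hb : negS b ∈ suppPM f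
  · have hnc : negS c ∈ suppPM f := negS_mem_suppPM.2 (hle.trans_lt (negS_mem_suppPM.1 hb))
    have hcb : vS (negS c) - vS (negS b) ∈ P := by
      rwa [vS_negS, vS_negS, neg_sub_neg]
    have heq := dotR_chiF_componentIn_eq_of_connStep (a := a) (connStep_of_vS_sub_vS_mem hnc hb hcb)
    rw [dotR_vS_negS, dotR_vS_negS, neg_inj] at heq
    rw [heq, sub_self]
    exact ⟨le_rfl, sub_nonneg.2 hle⟩
  · rw [mem_suppPM, not_lt] at hc
    rw [negS_mem_suppPM, not_lt] at hb
    have hchi_b := dotR_chiF_vS_mem_Icc (componentIn_subset (P := P) (a := a)) hone hb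
    have hchi_c := dotR_chiF_vS_mem_Icc (b := negS c) (componentIn_subset (P := P) (a := a)) hone
      (by rwa [dotR_vS_negS, neg_nonneg])
    rw [dotR_vS_negS, dotR_vS_negS] at hchi_c
    exact ⟨by linarith [hchi_b.1, hchi_c.1], by linarith [hchi_b.2, hchi_c.2]⟩

theorem dotR_chiF_componentIn_mem_Icc (hP : P ⊆ BnRoots n) (hf : f ∈ weightCone P)
    (hone : ∀ b ∈ suppPM f, 1 ≤ dotR f (vS b)) {α : Fin n → ℝ} (hα : α ∈ P) :
    dotR (chiF (componentIn P (suppPM f) a)) α ∈ Set.Icc 0 (dotR f α) := by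
  have hfα := hf α hα
  rcases exists_eq_vS_or_eq_vS_sub_vS (hP hα) with ⟨b, rfl⟩ | ⟨b, c, rfl⟩
  · exact dotR_chiF_vS_mem_Icc componentIn_subset hone hfα
  · rw [dotR_sub_right, sub_nonneg] at hfα
    exact dotR_chiF_componentIn_vS_sub_vS_mem_Icc hone hα hfα

theorem isConnIdeal_componentIn_suppPM (hP : P ⊆ BnRoots n) (hf : f ∈ weightCone P)
    (hone : ∀ b ∈ suppPM f, 1 ≤ dotR f (vS b)) (ha : a ∈ suppPM f) :
    IsConnIdeal P (componentIn P (suppPM f) a) :=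
  ⟨⟨(isotropic_suppPM f).mono componentIn_subset,
    fun _ hα => (dotR_chiF_componentIn_mem_Icc hP hf hone hα).1⟩, isConnectedIdl_componentIn ha⟩

theorem sub_chiF_componentIn_mem_weightCone (hP : P ⊆ BnRoots n) (hf : f ∈ weightCone P)
    (hone : ∀ b ∈ suppPM f, 1 ≤ dotR f (vS b)) :
    f - chiF (componentIn P (suppPM f) a) ∈ weightCone P := fun α hα => by
  rw [dotR_sub_left, sub_nonneg]
  exact (dotR_chiF_componentIn_mem_Icc hP hf hone hα).2

end SupportComponents

section TrivialIntersection

variable {n : ℕ} {P : Set (Fin n → ℝ)} {J K S : Finset (SIdx n)} {a b : SIdx n}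

theorem trivInter_refl (J : Finset (SIdx n)) : TrivInter J J :=
  fun h => h.2.1 subset_rfl

theorem trivInter_symm (h : TrivInter J K) : TrivInter K J :=
  fun hKJ => h ⟨Finset.inter_comm (suppF J) (suppF K) ▸ hKJ.1, hKJ.2.2, hKJ.2.1⟩

instance : Std.Symm (TrivInter (n := n)) :=
  ⟨fun _ _ => trivInter_symm⟩

theorem pairwise_trivInter_iff {M : Multiset (Finset (SIdx n))} :
    M.Pairwise TrivInter ↔ ∀ J ∈ M, ∀ K ∈ M, TrivInter J K := by
  refine ⟨fun h J hJ K hK => ?_, fun h => ⟨M.toList, M.coe_toList.symm, ?_⟩⟩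
  · by_cases hJK : J = K
    · exact hJK ▸ trivInter_refl J
    · exact h.forall hJ hK hJK
  · exact List.pairwise_of_forall_mem_list fun J hJ K hK =>
      h J (Multiset.mem_toList.1 hJ) K (Multiset.mem_toList.1 hK)

theorem TrivInter.subset_or_subset (h : TrivInter J K) (ha : a ∈ J) (hb : b ∈ K)
    (hab : a.2 = b.2) : J ⊆ K ∨ K ⊆ J := by
  by_contra! hne
  have hJ : a.2 ∈ suppF J := Finset.mem_image_of_mem _ ha
  have hK : a.2 ∈ suppF K := hab ▸ Finset.mem_image_of_mem _ hb
  exact h ⟨⟨a.2, Finset.mem_inter.2 ⟨hJ, hK⟩⟩, hne⟩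

theorem IsConnectedIdl.trivInter_componentIn (hK : IsConnectedIdl P K) (hS : Isotropic S)
    (hKS : K ⊆ S) : TrivInter (componentIn P S a) K := by
  rintro ⟨⟨i, hi⟩, -, hKJ⟩
  obtain ⟨hiJ, hiK⟩ := Finset.mem_inter.1 hi
  obtain ⟨b, hb, rfl⟩ := Finset.mem_image.1 hiJ
  obtain ⟨c, hc, hcb⟩ := Finset.mem_image.1 hiK
  obtain rfl := hS.eq_of_snd_eq (hKS hc) (componentIn_subset hb) hcb
  exact hKJ (hK.subset_componentIn hKS hc hb)

end TrivialIntersection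

/-- A multiset of connected ideals of `P` which pairwise intersect trivially; the possible
decompositions of a `P`-partition are such multisets. Triviality is required of all pairs of
members, which agrees with `Multiset.Pairwise` because `TrivInter` is reflexive and symmetric. -/
structure IsTrivialFamily {n : ℕ} (P : Set (Fin n → ℝ)) (M : Multiset (Finset (SIdx n))) :
    Prop where
  isConnIdeal : ∀ J ∈ M, IsConnIdeal P J
  trivInter : ∀ J ∈ M, ∀ K ∈ M, TrivInter J K

namespace IsTrivialFamily

variable {n : ℕ} {P : Set (Fin n → ℝ)} {M N : Multiset (Finset (SIdx n))} {J K : Finset (SIdx n)}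
  {a b : SIdx n}

theorem zero : IsTrivialFamily P 0 :=
  ⟨by simp, by simp⟩

theorem of_cons (hM : IsTrivialFamily P (J ::ₘ M)) : IsTrivialFamily P M :=
  ⟨fun K hK => hM.isConnIdeal K (Multiset.mem_cons_of_mem hK), fun K hK L hL =>
    hM.trivInter K (Multiset.mem_cons_of_mem hK) L (Multiset.mem_cons_of_mem hL)⟩

theorem cons (hM : IsTrivialFamily P M) (hJ : IsConnIdeal P J) (hJM : ∀ K ∈ M, TrivInter J K) :
    IsTrivialFamily P (J ::ₘ M) := by
  refine ⟨by simpa using ⟨hJ, hM.isConnIdeal⟩, fun K hK L hL => ?_⟩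
  rcases Multiset.mem_cons.1 hK with rfl | hKM <;>
    rcases Multiset.mem_cons.1 hL with rfl | hLM
  · exact trivInter_refl _
  · exact hJM L hLM
  · exact trivInter_symm (hJM K hKM)
  · exact hM.trivInter K hKM L hLM

theorem negS_notMem (hM : IsTrivialFamily P M) (hJ : J ∈ M) (ha : a ∈ J) (hK : K ∈ M) :
    negS a ∉ K := by
  intro hna
  rcases (hM.trivInter J hJ K hK).subset_or_subset ha hna rfl with hJK | hKJ
  · exact (hM.isConnIdeal K hK).1.1.negS_notMem (hJK ha) hna
  · exact (hM.isConnIdeal J hJ).1.1.negS_notMem ha (hKJ hna)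

theorem mem_suppPM_sum_iff (hM : IsTrivialFamily P M) :
    a ∈ suppPM (M.map chiF).sum ↔ ∃ J ∈ M, a ∈ J := by
  rw [mem_suppPM, dotR_sum_chiF_vS fun J hJ => (hM.isConnIdeal J hJ).1.1, sub_pos, Nat.cast_lt,
    ← Multiset.countP_pos]
  refine ⟨Nat.zero_lt_of_lt, fun hpos => ?_⟩
  obtain ⟨J, hJ, ha⟩ := Multiset.countP_pos.1 hpos
  rwa [Multiset.countP_eq_zero.2 fun K hK => hM.negS_notMem hJ ha hK]

theorem subset_suppPM_sum (hM : IsTrivialFamily P M) (hJ : J ∈ M) :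
    J ⊆ suppPM (M.map chiF).sum :=
  fun _ ha => hM.mem_suppPM_sum_iff.2 ⟨J, hJ, ha⟩

theorem subset_of_maximal (hM : IsTrivialFamily P M)
    (hJ : Maximal (fun L => L ∈ M ∧ a ∈ L) J) (hK : K ∈ M) (hbJ : b ∈ J) (hbK : b ∈ K) :
    K ⊆ J :=
  (hM.trivInter J hJ.1.1 K hK).subset_or_subset hbJ hbK rfl |>.elim
    (fun hJK => hJ.2 ⟨hK, hJK hJ.1.2⟩ hJK) id

theorem componentIn_eq_of_maximal (hM : IsTrivialFamily P M)
    (hJ : Maximal (fun L => L ∈ M ∧ a ∈ L) J) :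
    componentIn P (suppPM (M.map chiF).sum) a = J := by
  obtain ⟨hJM, haJ⟩ := hJ.1
  have hJS := hM.subset_suppPM_sum hJM
  refine (componentIn_subset_of_closed haJ fun b c hb hbc => ?_).antisymm
    ((hM.isConnIdeal J hJM).2.subset_componentIn hJS haJ (self_mem_componentIn (hJS haJ)))
  rcases vS_sub_vS_mem_of_connStep (isotropic_suppPM _) hbc with hbc' | hcb
  · obtain ⟨K, hK, hcK⟩ := hM.mem_suppPM_sum_iff.1 hbc.2.1
    have hbK : b ∈ K := (hM.isConnIdeal K hK).1.mem_of_vS_sub_vS_mem hcK hbc'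
    exact hM.subset_of_maximal hJ hK hb hbK hcK
  · exact (hM.isConnIdeal J hJM).1.mem_of_vS_sub_vS_mem hb hcb

theorem componentIn_mem (hM : IsTrivialFamily P M) (ha : a ∈ suppPM (M.map chiF).sum) :
    componentIn P (suppPM (M.map chiF).sum) a ∈ M := by
  obtain ⟨J₀, hJ₀, haJ₀⟩ := hM.mem_suppPM_sum_iff.1 ha
  obtain ⟨J, hJ⟩ := (M.toFinset.filter (a ∈ ·)).exists_maximal ⟨J₀, by simp [hJ₀, haJ₀]⟩
  simp only [Finset.mem_filter, Multiset.mem_toFinset] at hJ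
  rw [hM.componentIn_eq_of_maximal hJ]
  exact hJ.1.1

theorem eq_zero_of_suppPM_sum_eq_empty (hM : IsTrivialFamily P M)
    (h : suppPM (M.map chiF).sum = ∅) : M = 0 :=
  Multiset.eq_zero_of_forall_notMem fun J hJ => by
    obtain ⟨a, ha⟩ := (hM.isConnIdeal J hJ).2.1
    simpa [h] using hM.subset_suppPM_sum hJ ha

theorem eq_of_sum_eq (hM : IsTrivialFamily P M) (hN : IsTrivialFamily P N)
    (h : (M.map chiF).sum = (N.map chiF).sum) : M = N := by
  induction M using Multiset.strongInductionOn generalizing N with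
  | ih M ih =>
  rcases (suppPM (M.map chiF).sum).eq_empty_or_nonempty with hempty | ⟨a, ha⟩
  · rw [hM.eq_zero_of_suppPM_sum_eq_empty hempty, hN.eq_zero_of_suppPM_sum_eq_empty (h ▸ hempty)]
  have hJM := hM.componentIn_mem ha
  have hJN : componentIn P (suppPM (M.map chiF).sum) a ∈ N := h ▸ hN.componentIn_mem (h ▸ ha)
  obtain ⟨M', hM'⟩ := Multiset.exists_cons_of_mem hJM
  obtain ⟨N', hN'⟩ := Multiset.exists_cons_of_mem hJN
  generalize componentIn P (suppPM (M.map chiF).sum) a = J at hM' hN'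
  subst hM' hN'
  simp only [Multiset.map_cons, Multiset.sum_cons, add_right_inj] at h
  rw [ih M' (Multiset.lt_cons_self M' J) hM.of_cons hN.of_cons h]

end IsTrivialFamily

theorem exists_isTrivialFamily_sum_eq {n : ℕ} {P : Set (Fin n → ℝ)} (hP : P ⊆ BnRoots n)
    (f : Fin n → ℤ) (hf : (fun i => (f i : ℝ)) ∈ weightCone P) :
    ∃ M, IsTrivialFamily P M ∧ (fun i => (f i : ℝ)) = (M.map chiF).sum := by
  induction hk : ∑ i, (f i).natAbs using Nat.strong_induction_on generalizing f with
  | h k ih =>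
  set F : Fin n → ℝ := fun i => (f i : ℝ) with hF
  by_cases hF0 : F = 0
  · exact ⟨0, .zero, by simpa using hF0⟩
  obtain ⟨a, ha⟩ := suppPM_nonempty hF0
  set J := componentIn P (suppPM F) a
  have hone : ∀ b ∈ suppPM F, 1 ≤ dotR F (vS b) := fun b => one_le_dotR_vS_of_mem_suppPM f
  have hJS : J ⊆ suppPM F := componentIn_subset
  have hsub : (fun i => ((f - chiZ J) i : ℝ)) = F - chiF J := by
    funext i
    simp [hF, chiF_eq_chiZ]
  obtain ⟨M, hM, hsum⟩ := ih _ (hk ▸ sum_natAbs_sub_chiZ_lt f hJS ⟨a, self_mem_componentIn ha⟩)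
    (f - chiZ J) (hsub ▸ sub_chiF_componentIn_mem_weightCone hP hf hone) rfl
  rw [hsub] at hsum
  refine ⟨J ::ₘ M, hM.cons (isConnIdeal_componentIn_suppPM hP hf hone ha) fun K hK => ?_, ?_⟩
  · have hKS : K ⊆ suppPM F :=
      (hsum ▸ hM.subset_suppPM_sum hK).trans (suppPM_sub_chiF_subset hJS hone)
    exact (hM.isConnIdeal K hK).2.trivInter_componentIn (isotropic_suppPM F) hKS
  · rw [Multiset.map_cons, Multiset.sum_cons, ← hsum, add_sub_cancel]

theorem statement_15_general {n : ℕ} {P : Set (Fin n → ℝ)} (hP : P ⊆ BnRoots n) (f : Fin n → ℤ)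
    (hf : ∀ α ∈ P, 0 ≤ dotR (fun i => (f i : ℝ)) α) :
    ∃! M : Multiset (Finset (SIdx n)),
      (∀ J ∈ M, IsConnIdeal P J) ∧ M.Pairwise TrivInter ∧
      (fun i => (f i : ℝ)) = (M.map chiF).sum := by
  obtain ⟨M, hM, hsum⟩ := exists_isTrivialFamily_sum_eq hP f hf
  refine ⟨M, ⟨hM.isConnIdeal, pairwise_trivInter_iff.2 hM.trivInter, hsum⟩, ?_⟩
  rintro N ⟨hN, hNtriv, hNsum⟩
  have hNfam : IsTrivialFamily P N := ⟨hN, pairwise_trivInter_iff.1 hNtriv⟩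
  exact hNfam.eq_of_sum_eq hM (hNsum.symm.trans hsum)

theorem statement_15 (n : ℕ) (hn : 1 ≤ n) (P : Set (Fin n → ℝ)) (hP : IsSignedPoset n P)
    (f : Fin n → ℤ) (hf : ∀ α ∈ P, 0 ≤ dotR (fun i => (f i : ℝ)) α) :
    ∃! M : Multiset (Finset (SIdx n)),
      (∀ J ∈ M, IsConnIdeal P J) ∧ M.Pairwise TrivInter ∧
      (fun i => (f i : ℝ)) = (M.map chiF).sum :=
  statement_15_general hP.1 f hf
end
end

section
/- Let P ⊆ Φ_{B_n} be a signed poset, k a field, and S = k[U_J : J ∈ J_conn(P)] a polynomial ring with one variable per connected ideal of P. Then the monomials U_J U_K, as {J, K} ranges over Π(P), listed in some (equivalently, any) order, form a regular sequence in S if and only if no connected ideal of P intersects two or more other connected ideals of P nontrivially (equivalently, the pairs in Π(P) are pairwise disjoint); in this case the quotient S/(U_J U_K : {J,K} ∈ Π(P)) is a complete intersection. -/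
open scoped Classical

noncomputable section

/-!
Monomials `x^{t_1}, …, x^{t_r}` form a regular sequence if and only if they are nonconstant and
have pairwise disjoint supports. A monomial coprime to the generators of a monomial ideal is a
nonzerodivisor modulo that ideal. Conversely, take `i < j` and multiply `x^{t_j}` by
`x^{t_i} / gcd(x^{t_i}, x^{t_j})`: the product lies in `(x^{t_i})`, so regularity forces some
`x^{t_l}` with `l < j` to divide this quotient. If `t_i` and `t_j` were not disjoint, then `l ≠ i`
and `x^{t_l}` would divide `x^{t_i}`, contradicting the disjointness of `t_l` and `t_i` known by
induction on `j`.

For the monomials `U_J U_K` with `{J, K} ∈ Π(P)`, pairwise disjointness of the supports says that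
every `J` lies in at most one pair.
-/

section Exponents

variable {σ : Type*} {s t u : σ →₀ ℕ}

theorem disjoint_iff_forall_eq_zero_or_eq_zero :
    Disjoint s t ↔ ∀ x, s x = 0 ∨ t x = 0 := by
  simp only [Finsupp.disjoint_iff, Finset.disjoint_left, Finsupp.mem_support_iff, not_not,
    or_iff_not_imp_left]

theorem le_of_le_add_of_disjoint (hle : u ≤ s + t) (hdisj : Disjoint u s) : u ≤ t := by
  intro x
  have hx := hle x
  rw [Finsupp.add_apply] at hx
  rcases disjoint_iff_forall_eq_zero_or_eq_zero.mp hdisj x with h | h <;> lia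

theorem disjoint_of_le_tsub_self (hle : s ≤ s - t) : Disjoint s t := by
  refine disjoint_iff_forall_eq_zero_or_eq_zero.mpr fun x => ?_
  have hx := hle x
  rw [Finsupp.tsub_apply] at hx
  lia

end Exponents

section MonomialIdeals

open MvPolynomial

variable {σ k ι : Type*} [CommSemiring k] {t : ι → σ →₀ ℕ} {A : Set ι} {s : σ →₀ ℕ}

theorem mem_span_monomial_image_iff {f : MvPolynomial σ k} :
    f ∈ Ideal.span ((fun j => monomial (t j) (1 : k)) '' A) ↔
      ∀ m ∈ f.support, ∃ j ∈ A, t j ≤ m := by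
  rw [← Set.image_image (fun s => monomial s (1 : k)) t, mem_ideal_span_monomial_image]
  simp only [Set.exists_mem_image]

theorem monomial_mem_span_monomial_image_iff [Nontrivial k] :
    monomial s 1 ∈ Ideal.span ((fun j => monomial (t j) (1 : k)) '' A) ↔ ∃ j ∈ A, t j ≤ s := by
  simp [mem_span_monomial_image_iff, support_monomial]

theorem span_range_monomial_ne_top_iff [Nontrivial k] :
    Ideal.span (Set.range fun j => monomial (t j) (1 : k)) ≠ ⊤ ↔ ∀ j, t j ≠ 0 := by
  rw [Ideal.ne_top_iff_one, ← Set.image_univ, one_def, monomial_mem_span_monomial_image_iff]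
  simp

theorem mem_span_of_monomial_mul_mem_of_disjoint {f : MvPolynomial σ k}
    (hdisj : ∀ j ∈ A, Disjoint (t j) s)
    (hmem : monomial s 1 * f ∈ Ideal.span ((fun j => monomial (t j) (1 : k)) '' A)) :
    f ∈ Ideal.span ((fun j => monomial (t j) (1 : k)) '' A) := by
  rw [mem_span_monomial_image_iff] at hmem ⊢
  intro m hm
  have hsm : s + m ∈ (monomial s 1 * f).support := by
    rwa [mem_support_iff, coeff_monomial_mul, one_mul, ← mem_support_iff]
  obtain ⟨j, hj, hle⟩ := hmem (s + m) hsm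
  exact ⟨j, hj, le_of_le_add_of_disjoint hle (hdisj j hj)⟩

end MonomialIdeals

section RegularSequences

open MvPolynomial

variable {σ k : Type} [CommRing k] [Nontrivial k] {r : ℕ} {t : Fin r → σ →₀ ℕ}

/-- The subtraction is truncated: `t i - t j` is the exponent of `x^{t_i} / gcd(x^{t_i}, x^{t_j})`. -/
theorem exists_lt_le_tsub_of_isRegSeq_monomial (hreg : IsRegSeq fun j => monomial (t j) (1 : k))
    {i j : Fin r} (hij : i < j) : ∃ l < j, t l ≤ t i - t j := by
  have hmul : monomial (t j) 1 * monomial (t i - t j) 1 ∈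
      Ideal.span ((fun l => monomial (t l) (1 : k)) '' Set.Iio j) := by
    rw [monomial_mul, one_mul, monomial_mem_span_monomial_image_iff]
    exact ⟨i, hij, le_add_tsub⟩
  exact monomial_mem_span_monomial_image_iff.mp (hreg.2 j j.isLt _ hmul)

theorem disjoint_of_lt_of_isRegSeq_monomial (hreg : IsRegSeq fun j => monomial (t j) (1 : k))
    {i j : Fin r} (hij : i < j) : Disjoint (t i) (t j) := by
  induction j using WellFoundedLT.induction generalizing i with
  | ind j ih =>
    obtain ⟨l, hlj, hle⟩ := exists_lt_le_tsub_of_isRegSeq_monomial hreg hij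
    suffices l = i from disjoint_of_le_tsub_self (this ▸ hle)
    by_contra hli
    have hdisj : Disjoint (t l) (t i) := by
      rcases lt_or_gt_of_ne hli with h | h
      · exact ih i hij h
      · exact (ih l hlj h).symm
    exact span_range_monomial_ne_top_iff.mp hreg.1 l
      (hdisj.eq_bot_of_le (hle.trans tsub_le_self))

theorem isRegSeq_monomial_iff :
    IsRegSeq (fun j => monomial (t j) (1 : k)) ↔
      (∀ j, t j ≠ 0) ∧ Pairwise fun i j => Disjoint (t i) (t j) := by
  constructor
  · intro hreg
    refine ⟨span_range_monomial_ne_top_iff.mp hreg.1, fun i j hij => ?_⟩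
    rcases lt_or_gt_of_ne hij with h | h
    · exact disjoint_of_lt_of_isRegSeq_monomial hreg h
    · exact (disjoint_of_lt_of_isRegSeq_monomial hreg h).symm
  · rintro ⟨hne, hdisj⟩
    refine ⟨span_range_monomial_ne_top_iff.mpr hne, fun m hm f hf => ?_⟩
    exact mem_span_of_monomial_mul_mem_of_disjoint
      (fun j (hj : (j : ℕ) < m) => hdisj (Fin.ne_of_lt hj)) hf

theorem isRegSeq_iff_of_range_eq_monomial_image {T : Set (σ →₀ ℕ)}
    {g : Fin r → MvPolynomial σ k} (hinj : Function.Injective g)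
    (hrange : Set.range g = (fun s => monomial s (1 : k)) '' T) :
    IsRegSeq g ↔ 0 ∉ T ∧ T.Pairwise Disjoint := by
  obtain ⟨t, rfl⟩ : ∃ t : Fin r → σ →₀ ℕ, (fun s => monomial s (1 : k)) ∘ t = g :=
    (Set.range_subset_range_iff_exists_comp.mp
      (hrange.trans_subset (Set.image_subset_range _ _))).imp fun _ => Eq.symm
  obtain rfl : Set.range t = T := by
    rw [Set.range_comp] at hrange
    exact (monomial_left_injective one_ne_zero).image_injective hrange
  refine isRegSeq_monomial_iff.trans (and_congr (by simp) ?_)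
  rw [← Set.image_univ, hinj.of_comp.injOn.pairwise_image, Set.pairwise_univ]

end RegularSequences

/-- The exponent vectors of the quadratic monomials `X a * X b` with `R a b`; for symmetric
irreflexive `R` they generate the edge ideal of the graph `R`. -/
def pairExponents {σ : Type*} (R : σ → σ → Prop) : Set (σ →₀ ℕ) :=
  {s | ∃ a b, R a b ∧ s = Finsupp.single a 1 + Finsupp.single b 1}

section PairMonomials

open MvPolynomial

variable {σ : Type*} {R : σ → σ → Prop}

theorem zero_notMem_pairExponents : 0 ∉ pairExponents R := by
  rintro ⟨a, b, -, h⟩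
  simp [eq_comm (a := (0 : σ →₀ ℕ))] at h

theorem disjoint_single_add_single_iff {a b c d : σ} :
    Disjoint (Finsupp.single a 1 + Finsupp.single b 1 : σ →₀ ℕ)
        (Finsupp.single c 1 + Finsupp.single d 1) ↔
      (a ≠ c ∧ a ≠ d) ∧ b ≠ c ∧ b ≠ d := by
  rw [disjoint_comm]
  simp [Finsupp.disjoint_iff, Finsupp.support_add_eq_union]

theorem pairwise_disjoint_pairExponents_iff [Std.Symm R] :
    (pairExponents R).Pairwise Disjoint ↔ Relator.RightUnique R := by
  constructor
  · intro hdisj a b c hab hac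
    have heq := hdisj.eq ⟨a, b, hab, rfl⟩ ⟨a, c, hac, rfl⟩ fun h =>
      (disjoint_single_add_single_iff.mp h).1.1 rfl
    exact Finsupp.single_left_injective one_ne_zero (add_left_cancel heq)
  · rintro huniq _ ⟨a, b, hab, rfl⟩ _ ⟨c, d, hcd, rfl⟩ hne
    rw [disjoint_single_add_single_iff]
    refine ⟨⟨?_, ?_⟩, ?_, ?_⟩ <;> rintro rfl <;> apply hne
    · rw [huniq hab hcd]
    · rw [huniq hab (symm_of R hcd), add_comm]
    · rw [huniq (symm_of R hab) hcd, add_comm]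
    · rw [huniq (symm_of R hab) (symm_of R hcd)]

theorem setOf_X_mul_X_eq_monomial_image (k : Type*) [CommSemiring k] (R : σ → σ → Prop) :
    {f : MvPolynomial σ k | ∃ a b, R a b ∧ f = X a * X b} =
      (fun s => monomial s (1 : k)) '' pairExponents R := by
  have hXX (a b : σ) : (X a * X b : MvPolynomial σ k) =
      monomial (Finsupp.single a 1 + Finsupp.single b 1) 1 := by
    simp only [X, monomial_mul, one_mul]
  ext f
  simp only [hXX]
  constructor
  · rintro ⟨a, b, hab, rfl⟩
    exact ⟨_, ⟨a, b, hab, rfl⟩, rfl⟩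
  · rintro ⟨_, ⟨a, b, hab, rfl⟩, rfl⟩
    exact ⟨a, b, hab, rfl⟩

theorem finite_setOf_X_mul_X [Finite σ] (k : Type*) [CommSemiring k] (R : σ → σ → Prop) :
    {f : MvPolynomial σ k | ∃ a b, R a b ∧ f = X a * X b}.Finite := by
  refine (Set.finite_range fun p : σ × σ => (X p.1 * X p.2 : MvPolynomial σ k)).subset ?_
  rintro _ ⟨a, b, -, rfl⟩
  exact ⟨(a, b), rfl⟩

theorem isRegSeq_iff_rightUnique_of_range_eq {σ k : Type} [CommRing k] [Nontrivial k]
    {R : σ → σ → Prop} [Std.Symm R] {r : ℕ} {g : Fin r → MvPolynomial σ k}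
    (hinj : Function.Injective g)
    (hrange : Set.range g = {f | ∃ a b, R a b ∧ f = X a * X b}) :
    IsRegSeq g ↔ Relator.RightUnique R := by
  rw [isRegSeq_iff_of_range_eq_monomial_image hinj
      (hrange.trans (setOf_X_mul_X_eq_monomial_image k R)),
    pairwise_disjoint_pairExponents_iff, and_iff_right zero_notMem_pairExponents]

end PairMonomials

section SignedPosets

variable {n : ℕ} {P : Set (Fin n → ℝ)}

theorem NontrivInter.symm {J K : Finset (SIdx n)} (h : NontrivInter J K) : NontrivInter K J :=
  ⟨Finset.inter_comm (suppF J) (suppF K) ▸ h.1, h.2.2, h.2.1⟩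

instance : Std.Symm fun J K : ConnIdx n P => NontrivInter J.val K.val :=
  ⟨fun _ _ => NontrivInter.symm⟩

theorem noDoubleNontriv_iff_rightUnique :
    NoDoubleNontriv n P ↔
      Relator.RightUnique fun J K : ConnIdx n P => NontrivInter J.val K.val :=
  ⟨fun h J K K' hJK hJK' => Subtype.ext (h J K K' J.2 K.2 K'.2 hJK hJK'),
    fun h J K K' hJ hK hK' hJK hJK' =>
      congrArg Subtype.val (h (a := ⟨J, hJ⟩) (b := ⟨K, hK⟩) (c := ⟨K', hK'⟩) hJK hJK')⟩

end SignedPosets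

theorem statement_16_general (n : ℕ) (P : Set (Fin n → ℝ)) (k : Type)
    [CommRing k] [Nontrivial k] :
    (∀ (r : ℕ) (g : Fin r → MvPolynomial (ConnIdx n P) k),
        Function.Injective g →
        Set.range g = {f | ∃ J K : ConnIdx n P, NontrivInter J.val K.val ∧
          f = MvPolynomial.X J * MvPolynomial.X K} →
        (IsRegSeq g ↔ NoDoubleNontriv n P)) ∧
    (NoDoubleNontriv n P →
      ∃ (r : ℕ) (g : Fin r → MvPolynomial (ConnIdx n P) k),
        IsRegSeq g ∧
        Ideal.span (Set.range g) =
          Ideal.span {f | ∃ J K : ConnIdx n P, NontrivInter J.val K.val ∧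
            f = MvPolynomial.X J * MvPolynomial.X K}) := by
  have hiff {r : ℕ} {g : Fin r → MvPolynomial (ConnIdx n P) k} (hinj : Function.Injective g)
      (hrange : Set.range g = {f | ∃ J K : ConnIdx n P, NontrivInter J.val K.val ∧
        f = MvPolynomial.X J * MvPolynomial.X K}) : IsRegSeq g ↔ NoDoubleNontriv n P :=
    (isRegSeq_iff_rightUnique_of_range_eq hinj hrange).trans
      noDoubleNontriv_iff_rightUnique.symm
  refine ⟨fun _ _ => hiff, fun hdouble => ?_⟩
  obtain ⟨r, g, hinj, hrange⟩ := (finite_setOf_X_mul_X k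
    fun J K : ConnIdx n P => NontrivInter J.val K.val).fin_param
  exact ⟨r, g, (hiff hinj hrange).mpr hdouble, by rw [hrange]⟩

theorem statement_16 (n : ℕ) (hn : 1 ≤ n) (P : Set (Fin n → ℝ)) (hP : IsSignedPoset n P)
    (k : Type) [Field k] :
    (∀ (r : ℕ) (g : Fin r → MvPolynomial (ConnIdx n P) k),
        Function.Injective g →
        Set.range g = {f | ∃ J K : ConnIdx n P, NontrivInter J.val K.val ∧
          f = MvPolynomial.X J * MvPolynomial.X K} →
        (IsRegSeq g ↔ NoDoubleNontriv n P)) ∧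
    (NoDoubleNontriv n P →
      ∃ (r : ℕ) (g : Fin r → MvPolynomial (ConnIdx n P) k),
        IsRegSeq g ∧
        Ideal.span (Set.range g) =
          Ideal.span {f | ∃ J K : ConnIdx n P, NontrivInter J.val K.val ∧
            f = MvPolynomial.X J * MvPolynomial.X K}) :=
  statement_16_general n P k
end
end
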